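/- Let 1 < q < 2 < p < ∞ with 1/q + 1/p = 1. The system B = {ψ_m}_{m=1}^∞ is bi-democratic: there is a constant C such that for every finite A ⊂ ℕ, ‖Σ_{m∈A} ψ_m‖_{L_q} · ‖Σ_{m∈A} ψ_m‖_{L_p} ≤ C |A|. -/

import Mathlib

open MeasureTheory Filter

noncomputable section

/-- Rademacher functions `r_k(t) = sign (sin (2^k π t))`, for `k ≥ 1`. -/
def rademacher (k : ℕ) (t : ℝ) : ℝ := Real.sign (Real.sin ((2:ℝ) ^ k * Real.pi * t))

/-- The Walsh system: for `n = ∑ ε_j 2^(j-1)`, `W_n = ∏ r_j^(ε_j)`. -/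
def walsh (n : ℕ) (t : ℝ) : ℝ :=
  ∏ j ∈ Finset.range n, if n.testBit j then rademacher (j + 1) t else 1

/-- The Olevskiĭ matrix entries `a_{ij}^{(k)}`, with `1 ≤ i, j ≤ 2^k` (1-based indices). -/
def olevskii (k i j : ℕ) : ℝ :=
  if j = 1 then (2:ℝ) ^ (-(k:ℝ) / 2)
  else
    let s := Nat.log 2 (j - 1)
    let ν := j - 2 ^ s
    if (ν - 1) * 2 ^ (k - s) < i ∧ i ≤ (2 * ν - 1) * 2 ^ (k - s - 1) then
      (2:ℝ) ^ (((s:ℝ) - k) / 2)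
    else if (2 * ν - 1) * 2 ^ (k - s - 1) < i ∧ i ≤ ν * 2 ^ (k - s) then
      -((2:ℝ) ^ (((s:ℝ) - k) / 2))
    else 0

/-- `N_k = 2^(10^k)`. -/
def Nn (k : ℕ) : ℕ := 2 ^ 10 ^ k

/-- `F_0 = 0`, `F_k = F_(k-1) + N_k - 1`. -/
def Fn : ℕ → ℕ
  | 0 => 0
  | k + 1 => Fn k + Nn (k + 1) - 1

/-- `φ_k`, the `k`-th (1-based) Walsh function that is not a Rademacher function,
in the Walsh order. -/
def phi (k : ℕ) : ℝ → ℝ := walsh (Nat.nth (fun n => ¬ ∃ m : ℕ, n = 2 ^ m) (k - 1))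

/-- `ψ_i^{(k)} = φ_k/√N_k + ∑_{j=2}^{N_k} a_{ij}^{(10^k)} r_{F_{k-1}+j-1}`. -/
def psiBlock (k i : ℕ) : ℝ → ℝ := fun t =>
  phi k t / Real.sqrt (Nn k) +
    ∑ j ∈ Finset.Icc 2 (Nn k), olevskii (10 ^ k) i j * rademacher (Fn (k - 1) + j - 1) t

/-- Cumulative block lengths: `cum k = N_1 + ⋯ + N_k`. -/
def cum : ℕ → ℕ
  | 0 => 0
  | k + 1 => cum k + Nn (k + 1)

lemma le_cum (k : ℕ) : k ≤ cum k := by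
  induction k with
  | zero => simp [cum]
  | succ k ih =>
      have h : 1 ≤ Nn (k + 1) := Nat.one_le_two_pow
      simp only [cum]; omega

/-- `psi m` is `ψ_{m+1}`, the `(m+1)`-th element of the system
`B = (ψ_1^{(1)}, …, ψ_{N_1}^{(1)}, ψ_1^{(2)}, …)` (0-based global indexing). -/
def psi (m : ℕ) : ℝ → ℝ :=
  let k := Nat.find (show ∃ k, m + 1 ≤ cum k from ⟨m + 1, le_cum (m + 1)⟩)
  psiBlock k (m + 1 - cum (k - 1))

/-- `⟨f, g⟩ = ∫_0^1 f g`. -/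
def inner01 (f g : ℝ → ℝ) : ℝ := ∫ t in Set.Icc (0:ℝ) 1, f t * g t

/-- The `L_p([0,1])` norm of a function. -/
def LpNorm (p : ℝ) (f : ℝ → ℝ) : ℝ :=
  (∫ t in Set.Icc (0:ℝ) 1, |f t| ^ p) ^ (1 / p)

/-- `ρ` is a greedy ordering for the coefficient sequence `c`. -/
def IsGreedyOrdering (c : ℕ → ℝ) (ρ : ℕ → ℕ) : Prop :=
  Function.Injective ρ ∧ {j | c j ≠ 0} ⊆ Set.range ρ ∧
    ∀ j k : ℕ, j < k → |c (ρ k)| < |c (ρ j)| ∨ (|c (ρ k)| = |c (ρ j)| ∧ ρ j < ρ k)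

end

lemma my_abs_sign_le (x : ℝ) : |Real.sign x| ≤ 1 := by
  rcases Real.sign_apply_eq x with h | h | h <;> rw [h] <;> norm_num

lemma my_abs_rad (k : ℕ) (t : ℝ) : |rademacher k t| ≤ 1 := my_abs_sign_le _

lemma my_abs_walsh (n : ℕ) (t : ℝ) : |walsh n t| ≤ 1 := by
  unfold walsh
  rw [Finset.abs_prod]
  apply Finset.prod_le_one
  · intros; positivity
  · intro j _
    split_ifs
    · exact my_abs_rad _ _
    · simp

lemma my_meas_sign : Measurable Real.sign := by
  unfold Real.sign
  refine Measurable.ite measurableSet_Iio measurable_const ?_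
  exact Measurable.ite measurableSet_Ioi measurable_const measurable_const

lemma my_meas_rad (k : ℕ) : Measurable (rademacher k) := by
  unfold rademacher
  exact my_meas_sign.comp (by fun_prop)

lemma my_rad_double (k : ℕ) (t : ℝ) : rademacher (k + 1) t = rademacher k (2 * t) := by
  unfold rademacher
  congr 2
  ring

lemma my_rad_periodic (k : ℕ) (t : ℝ) : rademacher (k + 1) (t + 1) = rademacher (k + 1) t := by
  unfold rademacher
  congr 1
  rw [← Real.sin_add_nat_mul_two_pi ((2:ℝ) ^ (k+1) * Real.pi * t) (2 ^ k)]
  congr 1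
  push_cast
  ring

lemma my_rad_one_left (t : ℝ) (h0 : 0 < t) (h1 : t < 1/2) : rademacher 1 t = 1 := by
  unfold rademacher
  apply Real.sign_of_pos
  apply Real.sin_pos_of_pos_of_lt_pi
  · positivity
  · nlinarith [Real.pi_pos]

lemma my_rad_one_right (t : ℝ) (h0 : 1/2 < t) (h1 : t < 1) : rademacher 1 t = -1 := by
  unfold rademacher
  apply Real.sign_of_neg
  rw [← Real.sin_sub_two_pi]
  apply Real.sin_neg_of_neg_of_neg_pi_lt
  · nlinarith [Real.pi_pos]
  · nlinarith [Real.pi_pos]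

lemma my_mgf (L : ℕ) : ∀ c : ℕ → ℝ,
    ∫ t in (0:ℝ)..1, Real.exp (∑ l ∈ Finset.range L, c l * rademacher (l + 1) t)
      = ∏ l ∈ Finset.range L, Real.cosh (c l) := by
  induction L with
  | zero => intro c; simp
  | succ L ih =>
    intro c
    set G : ℝ → ℝ := fun t =>
      Real.exp (∑ l ∈ Finset.range L, c (l + 1) * rademacher (l + 1) t) with hG
    have hF : ∀ t, Real.exp (∑ l ∈ Finset.range (L + 1), c l * rademacher (l + 1) t)
        = Real.exp (c 0 * rademacher 1 t) * G (2 * t) := by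
      intro t
      rw [Finset.sum_range_succ', hG, ← Real.exp_add, add_comm]
      simp only [my_rad_double (_ + 1), zero_add]
    have hper : Function.Periodic G 1 := by
      intro t
      simp only [hG, my_rad_periodic]
    have hGm : Measurable G := by
      apply Real.measurable_exp.comp
      apply Finset.measurable_sum
      intro l _
      exact (my_meas_rad _).const_mul _
    have hmeas : Measurable (fun t => Real.exp (c 0 * rademacher 1 t) * G (2 * t)) :=
      (Real.measurable_exp.comp ((my_meas_rad 1).const_mul _)).mul
        (hGm.comp (measurable_const_mul 2))
    have hbd : ∀ t, ‖Real.exp (c 0 * rademacher 1 t) * G (2 * t)‖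
        ≤ Real.exp (∑ l ∈ Finset.range (L + 1), |c l|) := by
      intro t
      rw [← hF, Real.norm_eq_abs, Real.abs_exp]
      apply Real.exp_le_exp.mpr
      apply Finset.sum_le_sum
      intro l _
      calc c l * rademacher (l+1) t ≤ |c l * rademacher (l+1) t| := le_abs_self _
        _ = |c l| * |rademacher (l+1) t| := abs_mul _ _
        _ ≤ |c l| * 1 := by gcongr; exact my_abs_rad _ _
        _ = _ := mul_one _
    have hint : ∀ a b : ℝ, IntervalIntegrable
        (fun t => Real.exp (c 0 * rademacher 1 t) * G (2 * t)) volume a b := by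
      intro a b
      rw [intervalIntegrable_iff]
      apply Measure.integrableOn_of_bounded (M := Real.exp (∑ l ∈ Finset.range (L + 1), |c l|))
      · rw [Set.uIoc]; simp
      · exact hmeas.aestronglyMeasurable
      · exact Filter.Eventually.of_forall hbd
    simp only [hF]
    rw [← intervalIntegral.integral_add_adjacent_intervals (hint 0 (1/2)) (hint (1/2) 1)]
    have hne : ∀ a : ℝ, ∀ᵐ t ∂(volume : Measure ℝ), t ≠ a := by
      intro a
      rw [ae_iff]; simp
    have e1 : ∫ t in (0:ℝ)..(1/2), Real.exp (c 0 * rademacher 1 t) * G (2 * t)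
        = ∫ t in (0:ℝ)..(1/2), Real.exp (c 0) * G (2 * t) := by
      apply intervalIntegral.integral_congr_ae
      filter_upwards [hne (1/2)] with t ht hm
      rw [Set.uIoc_of_le (by norm_num)] at hm
      rw [my_rad_one_left t hm.1 (lt_of_le_of_ne hm.2 ht), mul_one]
    have e2 : ∫ t in (1/2:ℝ)..1, Real.exp (c 0 * rademacher 1 t) * G (2 * t)
        = ∫ t in (1/2:ℝ)..1, Real.exp (-c 0) * G (2 * t) := by
      apply intervalIntegral.integral_congr_ae
      filter_upwards [hne 1] with t ht hm
      rw [Set.uIoc_of_le (by norm_num)] at hm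
      rw [my_rad_one_right t hm.1 (lt_of_le_of_ne hm.2 ht), mul_neg_one]
    rw [e1, e2, intervalIntegral.integral_const_mul, intervalIntegral.integral_const_mul,
      intervalIntegral.integral_comp_mul_left G (by norm_num),
      intervalIntegral.integral_comp_mul_left G (by norm_num)]
    have e3 : ∫ t in (1:ℝ)..2, G t = ∫ t in (0:ℝ)..1, G t := by
      have := hper.intervalIntegral_add_eq 1 0
      norm_num at this
      exact this
    have hI := ih (fun l => c (l + 1))
    norm_num
    rw [e3, Finset.prod_range_succ', ← hI, Real.cosh_eq]
    simp only [hG]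
    ring

lemma my_mgf_le (L : ℕ) (c : ℕ → ℝ) :
    ∫ t in (0:ℝ)..1, Real.exp (∑ l ∈ Finset.range L, c l * rademacher (l + 1) t)
      ≤ Real.exp ((∑ l ∈ Finset.range L, c l ^ 2) / 2) := by
  rw [my_mgf, Finset.sum_div, Real.exp_sum]
  apply Finset.prod_le_prod
  · intros; exact (Real.cosh_pos _).le
  · intros; exact Real.cosh_le_exp_half_sq _

/-- potential function argument for the geometric sum -/
lemma my_geom (x : ℝ) (hx : 0 < x) (a : ℕ → ℝ) (ha0 : ∀ k, 0 < a k)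
    (ha : ∀ k, 2 * a k ≤ a (k + 1)) (K : ℕ) :
    ∑ k ∈ Finset.range K, min (x ^ 2) (a k ^ 2) / a k ≤ 4 * x := by
  have key : ∀ K, ∑ k ∈ Finset.range (K + 1), min (x ^ 2) (a k ^ 2) / a k
      ≤ if a K ≤ x then 2 * a K else 4 * x - 2 * (x ^ 2 / a K) := by
    intro K
    have hval : ∀ k, min (x ^ 2) (a k ^ 2) / a k = if a k ≤ x then a k else x ^ 2 / a k := by
      intro k
      have := ha0 k
      split_ifs with h
      · rw [min_eq_right (by gcongr)]
        field_simp
      · push Not at h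
        rw [min_eq_left (by gcongr)]
    induction K with
    | zero =>
      rw [zero_add, Finset.sum_range_one, hval]
      have := ha0 0
      split_ifs with h
      · linarith
      · push Not at h
        have : x ^ 2 / a 0 ≤ x := by rw [div_le_iff₀ this]; nlinarith
        linarith
    | succ K ih =>
      rw [Finset.sum_range_succ, hval]
      have h1 := ha0 K
      have h2 := ha0 (K + 1)
      have h3 := ha K
      refine (add_le_add_left ih _).trans ?_
      by_cases hK1 : a (K + 1) ≤ x
      · have hK : a K ≤ x := by linarith
        rw [if_pos hK1, if_pos hK, if_pos hK1]; linarith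
      · rw [if_neg hK1, if_neg hK1]
        push Not at hK1
        by_cases hK : a K ≤ x
        · rw [if_pos hK]
          have : 3 * (x ^ 2 / a (K+1)) ≤ 4 * x - 2 * a K := by
            rw [← mul_div_assoc, div_le_iff₀ h2]
            by_cases hc : a (K+1) ≤ 2 * x
            · nlinarith [mul_nonneg (sub_nonneg.2 hc) (sub_nonneg.2 hK1.le), mul_nonneg h2.le (sub_nonneg.2 h3)]
            · push Not at hc
              nlinarith [mul_nonneg h2.le (sub_nonneg.2 hK), mul_pos hx hx, mul_pos hx (sub_pos.2 hc)]
          linarith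
        · rw [if_neg hK]
          have : x ^ 2 / a (K+1) ≤ (x ^ 2 / a K) / 2 := by
            rw [div_div]
            gcongr
            linarith
          have : 0 ≤ x ^ 2 / a K := by positivity
          linarith
  cases K with
  | zero => simp; positivity
  | succ K =>
    refine (key K).trans ?_
    split_ifs with h
    · linarith
    · have := ha0 K
      have : 0 ≤ x ^ 2 / a K := by positivity
      linarith

/-- counting function of dyadic blocks -/
noncomputable def myS (k : ℕ) (E : Finset ℕ) (s ν : ℕ) : ℝ :=
  ∑ i ∈ E, if ν * 2 ^ (k - s) < i ∧ i ≤ (ν + 1) * 2 ^ (k - s) then (1:ℝ) else 0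

lemma myS_split (k : ℕ) (E : Finset ℕ) (s ν : ℕ) (hs : s < k) :
    myS k E s ν = myS k E (s + 1) (2 * ν) + myS k E (s + 1) (2 * ν + 1) := by
  unfold myS
  rw [← Finset.sum_add_distrib]
  apply Finset.sum_congr rfl
  intro i _
  have : 2 ^ (k - s) = 2 * 2 ^ (k - (s + 1)) := by
    rw [← pow_succ']; congr 1; omega
  rw [this]
  have h0 : 0 < 2 ^ (k - (s + 1)) := by positivity
  generalize 2 ^ (k - (s + 1)) = M at *
  have e1 : ν * (2 * M) = 2 * (ν * M) := by ring
  have e2 : (ν + 1) * (2 * M) = 2 * (ν * M) + 2 * M := by ring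
  have e3 : 2 * ν * M = 2 * (ν * M) := by ring
  have e4 : (2 * ν + 1) * M = 2 * (ν * M) + M := by ring
  have e5 : (2 * ν + 1 + 1) * M = 2 * (ν * M) + 2 * M := by ring
  rw [e1, e2, e3, e4, e5]
  generalize ν * M = z
  split_ifs <;> first | omega | norm_num

lemma my_olev (k : ℕ) (E : Finset ℕ) (s ν : ℕ) (hs : s < k) (hν : ν < 2 ^ s) :
    ∑ i ∈ E, olevskii k i (2 ^ s + ν + 1)
      = (2:ℝ) ^ (((s:ℝ) - k) / 2) * (myS k E (s + 1) (2 * ν) - myS k E (s + 1) (2 * ν + 1)) := by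
  unfold myS
  rw [← Finset.sum_sub_distrib, Finset.mul_sum]
  apply Finset.sum_congr rfl
  intro i _
  have hpos : 0 < 2 ^ s := by positivity
  have hlog : Nat.log 2 (2 ^ s + ν + 1 - 1) = s := by
    rw [Nat.log_eq_iff]
    · rw [pow_succ]; omega
    · right; omega
  unfold olevskii
  rw [if_neg (by omega)]
  simp only [hlog]
  have : 2 ^ (k - s) = 2 * 2 ^ (k - (s + 1)) := by
    rw [← pow_succ']; congr 1; omega
  rw [this]
  have h0 : 0 < 2 ^ (k - (s + 1)) := by positivity
  rw [Nat.sub_sub k s 1]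
  generalize 2 ^ (k - (s + 1)) = M at *
  have f1 : 2 ^ s + ν + 1 - 2 ^ s = ν + 1 := by omega
  rw [f1]
  have f2 : 2 * (ν + 1) - 1 = 2 * ν + 1 := by omega
  rw [f2, Nat.add_sub_cancel]
  have e1 : ν * (2 * M) = 2 * (ν * M) := by ring
  have e2 : (ν + 1) * (2 * M) = 2 * (ν * M) + 2 * M := by ring
  have e3 : 2 * ν * M = 2 * (ν * M) := by ring
  have e4 : (2 * ν + 1) * M = 2 * (ν * M) + M := by ring
  have e5 : (2 * ν + 1 + 1) * M = 2 * (ν * M) + 2 * M := by ring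
  rw [e1, e2, e3, e4, e5]
  generalize ν * M = z
  split_ifs <;> first | omega | norm_num

lemma my_sum_double (n : ℕ) (f : ℕ → ℝ) :
    ∑ ν ∈ Finset.range (2 * n), f ν = ∑ ν ∈ Finset.range n, (f (2 * ν) + f (2 * ν + 1)) := by
  induction n with
  | zero => simp
  | succ n ih => rw [Finset.sum_range_succ, ← ih, Nat.mul_succ, Finset.sum_range_succ, Finset.sum_range_succ]; ring

/-- energy at level s -/
noncomputable def myT (k : ℕ) (E : Finset ℕ) (s : ℕ) : ℝ :=
  (2:ℝ) ^ ((s:ℝ) - k) * ∑ ν ∈ Finset.range (2 ^ s), myS k E s ν ^ 2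

lemma myT_step (k : ℕ) (E : Finset ℕ) (s : ℕ) (hs : s < k) :
    ∑ ν ∈ Finset.range (2 ^ s), (∑ i ∈ E, olevskii k i (2 ^ s + ν + 1)) ^ 2
      = myT k E (s + 1) - myT k E s := by
  unfold myT
  rw [pow_succ', my_sum_double]
  have h2 : (2:ℝ) ^ (((s + 1 : ℕ) : ℝ) - k) = 2 * (2:ℝ) ^ ((s:ℝ) - k) := by
    rw [show (((s + 1 : ℕ) : ℝ) - k) = ((s:ℝ) - k) + 1 by push_cast; ring,
      Real.rpow_add_one (by norm_num)]; ring
  rw [h2, Finset.mul_sum, Finset.mul_sum, ← Finset.sum_sub_distrib]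
  apply Finset.sum_congr rfl
  intro ν hν
  rw [my_olev k E s ν hs (Finset.mem_range.1 hν), myS_split k E s ν hs, mul_pow]
  have : ((2:ℝ) ^ (((s:ℝ) - k) / 2)) ^ 2 = (2:ℝ) ^ ((s:ℝ) - k) := by
    rw [← Real.rpow_natCast, ← Real.rpow_mul (by norm_num)]
    congr 1; push_cast; ring
  rw [this]; ring

lemma my_energy (k : ℕ) (E : Finset ℕ) : ∀ s ≤ k,
    ∑ j ∈ Finset.Ico 1 (2 ^ s), (∑ i ∈ E, olevskii k i (j + 1)) ^ 2
      = myT k E s - myT k E 0 := by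
  intro s
  induction s with
  | zero => simp
  | succ s ih =>
    intro hs
    rw [← Finset.sum_Ico_consecutive _ (Nat.one_le_two_pow : 1 ≤ 2 ^ s)
      (Nat.pow_le_pow_right (by norm_num) (Nat.le_succ s)), ih (by omega),
      Finset.sum_Ico_eq_sum_range]
    have : 2 ^ s.succ - 2 ^ s = 2 ^ s := by rw [pow_succ]; omega
    rw [this, myT_step k E s (by omega)]
    ring

lemma my_energy_le (k : ℕ) (E : Finset ℕ) (hE : E ⊆ Finset.Icc 1 (2 ^ k)) :
    ∑ j ∈ Finset.Icc 2 (2 ^ k), (∑ i ∈ E, olevskii k i j) ^ 2 ≤ (E.card : ℝ) := by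
  have h1 : ∑ j ∈ Finset.Icc 2 (2 ^ k), (∑ i ∈ E, olevskii k i j) ^ 2
      = ∑ j ∈ Finset.Ico 1 (2 ^ k), (∑ i ∈ E, olevskii k i (j + 1)) ^ 2 := by
    rw [Finset.sum_Ico_add' (fun j => (∑ i ∈ E, olevskii k i j) ^ 2) 1 (2 ^ k) 1]
    rfl
  rw [h1, my_energy k E k le_rfl]
  have h0 : 0 ≤ myT k E 0 := by unfold myT; positivity
  have hT : myT k E k ≤ E.card := by
    unfold myT
    have hS : ∀ ν, myS k E k ν = if ν + 1 ∈ E then 1 else 0 := by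
      intro ν
      unfold myS
      rw [← Finset.sum_ite_eq' E (ν + 1) (fun _ => (1:ℝ))]
      apply Finset.sum_congr rfl
      intro i _
      simp only [Nat.sub_self, pow_zero, mul_one]
      congr 1
      simp only [eq_iff_iff]
      omega
    simp only [hS, sub_self, Real.rpow_zero, one_mul]
    have : ∀ ν : ℕ, (if ν + 1 ∈ E then (1:ℝ) else 0) ^ 2 = if ν + 1 ∈ E then 1 else 0 := by
      intro ν; split_ifs <;> norm_num
    simp only [this]
    rw [← Finset.sum_filter, Finset.sum_const, nsmul_eq_mul, mul_one]
    have := Finset.card_le_card_of_injOn (s := {x ∈ Finset.range (2 ^ k) | x + 1 ∈ E}) (t := E) (fun x => x + 1)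
      (by intro x hx; simpa using (Finset.mem_filter.1 hx).2) (by intro x _ y _ h; simpa using h)
    exact_mod_cast this
  linarith

lemma my_flatten (d : ℕ → ℕ → ℝ) (K : ℕ) : ∃ c : ℕ → ℝ,
    (∀ t, ∑ l ∈ Finset.range (Fn K), c l * rademacher (l + 1) t
      = ∑ k ∈ Finset.range K, ∑ j ∈ Finset.Icc 2 (Nn (k + 1)),
          d k j * rademacher (Fn k + j - 1) t) ∧
    ∑ l ∈ Finset.range (Fn K), c l ^ 2
      = ∑ k ∈ Finset.range K, ∑ j ∈ Finset.Icc 2 (Nn (k + 1)), d k j ^ 2 := by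
  induction K with
  | zero => exact ⟨0, by simp [Fn], by simp [Fn]⟩
  | succ K ih =>
    obtain ⟨c, h1, h2⟩ := ih
    have hN : 1 ≤ Nn (K + 1) := Nat.one_le_two_pow
    have hF : Fn (K + 1) = Fn K + (Nn (K + 1) - 1) := by simp only [Fn]; omega
    have hI : ∀ g : ℕ → ℝ, ∑ j ∈ Finset.Icc 2 (Nn (K + 1)), g j
        = ∑ l ∈ Finset.range (Nn (K + 1) - 1), g (l + 2) := by
      intro g
      rw [show Finset.Icc 2 (Nn (K + 1)) = Finset.Ico 2 (Nn (K + 1) + 1) from rfl,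
        Finset.sum_Ico_eq_sum_range]
      apply Finset.sum_congr
      · congr 1
      · intros; rw [add_comm]
    refine ⟨fun l => if l < Fn K then c l else d K (l - Fn K + 2), ?_, ?_⟩
    · intro t
      rw [hF, Finset.sum_range_add, Finset.sum_range_succ, ← h1 t, hI]
      congr 1
      · apply Finset.sum_congr rfl
        intro l hl
        beta_reduce
        rw [if_pos (Finset.mem_range.1 hl)]
      · apply Finset.sum_congr rfl
        intro l hl
        beta_reduce
        rw [if_neg (by omega), Nat.add_sub_cancel_left]
        rfl
    · rw [hF, Finset.sum_range_add, Finset.sum_range_succ, ← h2, hI]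
      congr 1
      · apply Finset.sum_congr rfl
        intro l hl
        beta_reduce
        rw [if_pos (Finset.mem_range.1 hl)]
      · apply Finset.sum_congr rfl
        intro l hl
        beta_reduce
        rw [if_neg (by omega), Nat.add_sub_cancel_left]

lemma my_block (m : ℕ) : ∃ k i, psi m = psiBlock (k + 1) i ∧ 1 ≤ i ∧ i ≤ Nn (k + 1) ∧
    m + 1 = cum k + i := by
  have hex : ∃ k, m + 1 ≤ cum k := ⟨m + 1, le_cum (m + 1)⟩
  have hspec := Nat.find_spec hex
  have hmin : ∀ {j}, j < Nat.find hex → ¬ m + 1 ≤ cum j := fun h => Nat.find_min hex h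
  have hpsi : psi m = psiBlock (Nat.find hex) (m + 1 - cum (Nat.find hex - 1)) := rfl
  rcases hk : Nat.find hex with _ | k
  · rw [hk] at hspec; simp [cum] at hspec
  · rw [hk] at hspec hpsi
    have := hmin (j := k) (by omega)
    simp only [cum] at hspec
    simp only [Nat.add_sub_cancel] at hpsi
    exact ⟨k, _, hpsi, by omega, by omega, by omega⟩

lemma my_Nn_sqrt (k : ℕ) : 2 * Real.sqrt (Nn (k + 1)) ≤ Real.sqrt (Nn (k + 1 + 1)) := by
  apply Real.le_sqrt_of_sq_le
  rw [mul_pow, Real.sq_sqrt (by positivity)]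
  have : 2 ^ 2 * Nn (k + 1) ≤ Nn (k + 1 + 1) := by
    unfold Nn
    rw [← pow_add]
    apply Nat.pow_le_pow_right (by norm_num)
    have : 1 ≤ 10 ^ (k + 1) := Nat.one_le_pow _ _ (by norm_num)
    rw [pow_succ 10 (k + 1)]; omega
  exact_mod_cast this

/-- Decomposition: bounded part plus Rademacher sum. -/
lemma my_decomp (A : Finset ℕ) (hA : A.Nonempty) : ∃ (W : ℝ → ℝ) (c : ℕ → ℝ) (L : ℕ),
    (∀ t, ∑ m ∈ A, psi m t = W t + ∑ l ∈ Finset.range L, c l * rademacher (l + 1) t) ∧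
    (∀ t, |W t| ≤ 4 * Real.sqrt A.card) ∧
    ∑ l ∈ Finset.range L, c l ^ 2 ≤ A.card := by
  choose κ ι hpsi hι1 hι2 hm using my_block
  set K := A.sup κ + 1 with hK
  have hκ : ∀ m ∈ A, κ m ∈ Finset.range K := by
    intro m hm
    rw [Finset.mem_range]
    have := Finset.le_sup (f := κ) hm
    omega
  set B : ℕ → Finset ℕ := fun k => (A.filter (fun m => κ m = k)).image ι with hB
  have hinj : ∀ k, Set.InjOn ι (A.filter (fun m => κ m = k) : Finset ℕ) := by
    intro k x hx y hy h
    simp only [Finset.coe_filter, Set.mem_setOf_eq] at hx hy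
    have h1 := hm x
    have h2 := hm y
    rw [hx.2] at h1
    rw [hy.2] at h2
    omega
  have hBsub : ∀ k, B k ⊆ Finset.Icc 1 (Nn (k + 1)) := by
    intro k i hi
    simp only [hB, Finset.mem_image, Finset.mem_filter] at hi
    obtain ⟨m, ⟨_, rfl⟩, rfl⟩ := hi
    exact Finset.mem_Icc.2 ⟨hι1 m, hι2 m⟩
  have hBcard : ∑ k ∈ Finset.range K, (B k).card = A.card := by
    rw [Finset.card_eq_sum_card_fiberwise hκ]
    apply Finset.sum_congr rfl
    intro k _
    rw [hB, Finset.card_image_of_injOn (hinj k)]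
  have hsum : ∀ t, ∑ m ∈ A, psi m t = ∑ k ∈ Finset.range K, ∑ i ∈ B k, psiBlock (k + 1) i t := by
    intro t
    rw [← Finset.sum_fiberwise_of_maps_to hκ]
    apply Finset.sum_congr rfl
    intro k _
    rw [hB, Finset.sum_image (hinj k)]
    apply Finset.sum_congr rfl
    intro m hm
    rw [hpsi m, (Finset.mem_filter.1 hm).2]
  obtain ⟨c, hc1, hc2⟩ := my_flatten (fun k j => ∑ i ∈ B k, olevskii (10 ^ (k + 1)) i j) K
  refine ⟨fun t => ∑ k ∈ Finset.range K, (B k).card * (phi (k + 1) t / Real.sqrt (Nn (k + 1))),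
    c, Fn K, ?_, ?_, ?_⟩
  · intro t
    rw [hsum, hc1, ← Finset.sum_add_distrib]
    apply Finset.sum_congr rfl
    intro k _
    simp only [psiBlock, Nat.add_sub_cancel]
    rw [Finset.sum_add_distrib, Finset.sum_const, nsmul_eq_mul, Finset.sum_comm]
    simp only [Finset.sum_mul]
  · intro t
    have hpos : 0 < Real.sqrt A.card := by
      apply Real.sqrt_pos.2
      exact_mod_cast hA.card_pos
    have hN : ∀ k, 0 < Real.sqrt (Nn (k + 1)) := by
      intro k
      apply Real.sqrt_pos.2
      exact_mod_cast (Nat.two_pow_pos _ : 0 < Nn (k + 1))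
    refine le_trans ?_ (my_geom (Real.sqrt A.card) hpos (fun k => Real.sqrt (Nn (k + 1))) hN
      my_Nn_sqrt K)
    refine (Finset.abs_sum_le_sum_abs _ _).trans (Finset.sum_le_sum ?_)
    intro k hk
    have hNk := hN k
    have hw : |phi (k + 1) t| ≤ 1 := my_abs_walsh _ _
    rw [abs_mul, abs_div, Nat.abs_cast, abs_of_pos hNk, ← mul_div_assoc]
    apply div_le_div_of_nonneg_right _ hNk.le
    rw [Real.sq_sqrt (by positivity), Real.sq_sqrt (by positivity)]
    have hb1 : (B k).card ≤ A.card :=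
      hBcard ▸ Finset.single_le_sum (f := fun k => (B k).card) (fun _ _ => Nat.zero_le _) hk
    have hb2 : (B k).card ≤ Nn (k + 1) := by
      simpa using Finset.card_le_card (hBsub k)
    have : ((B k).card : ℝ) ≤ min (A.card : ℝ) (Nn (k + 1)) :=
      le_min (by exact_mod_cast hb1) (by exact_mod_cast hb2)
    nlinarith [(B k).card.cast_nonneg (α := ℝ)]
  · rw [hc2, ← hBcard]
    push_cast
    apply Finset.sum_le_sum
    intro k _
    exact my_energy_le _ _ (hBsub k)

lemma my_rpow_le_exp (r : ℝ) (hr : 0 < r) : ∃ D : ℝ, 0 ≤ D ∧ ∀ x : ℝ, 0 ≤ x → x ^ r ≤ D * Real.exp x := by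
  refine ⟨r ^ r, by positivity, fun x hx => ?_⟩
  have h1 : x / r ≤ Real.exp (x / r) := by
    have := Real.add_one_le_exp (x / r)
    linarith
  have h2 : (x / r) ^ r ≤ Real.exp x := by
    calc (x / r) ^ r ≤ Real.exp (x / r) ^ r := Real.rpow_le_rpow (by positivity) h1 hr.le
      _ = Real.exp x := by rw [← Real.exp_mul]; congr 1; field_simp
  rw [Real.div_rpow hx hr.le, div_le_iff₀ (by positivity)] at h2
  linarith

lemma my_bound (r : ℝ) (hr : 0 < r) : ∃ C : ℝ, 0 ≤ C ∧ ∀ A : Finset ℕ,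
    LpNorm r (fun t => ∑ m ∈ A, psi m t) ≤ C * Real.sqrt A.card := by
  obtain ⟨D, hD0, hD⟩ := my_rpow_le_exp r hr
  set Q : ℝ := D * Real.exp 4 * (2 * Real.exp (1/2)) with hQ
  have hQ0 : 0 ≤ Q := by positivity
  refine ⟨Q ^ (1 / r), by positivity, fun A => ?_⟩
  rcases A.eq_empty_or_nonempty with rfl | hA
  · have : LpNorm r (fun t => ∑ m ∈ (∅ : Finset ℕ), psi m t) = 0 := by
      unfold LpNorm
      simp [Real.zero_rpow hr.ne', hr.ne']
    rw [this]; simp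
  obtain ⟨W, c, L, hdec, hW, hc⟩ := my_decomp A hA
  set x := Real.sqrt A.card with hx
  have hx0 : 0 < x := by
    apply Real.sqrt_pos.2
    exact_mod_cast hA.card_pos
  have hx2 : x ^ 2 = A.card := Real.sq_sqrt (by positivity)
  set U : (ℕ → ℝ) → ℝ → ℝ := fun b t =>
    Real.exp (∑ l ∈ Finset.range L, b l * rademacher (l + 1) t) with hU
  have hUint : ∀ b, IntegrableOn (U b) (Set.Icc 0 1) := by
    intro b
    apply Measure.integrableOn_of_bounded (M := Real.exp (∑ l ∈ Finset.range L, |b l|))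
    · simp
    · apply Measurable.aestronglyMeasurable
      apply Real.measurable_exp.comp
      apply Finset.measurable_sum
      intro l _
      exact (my_meas_rad _).const_mul _
    · refine Filter.Eventually.of_forall fun t => ?_
      rw [hU, Real.norm_eq_abs, Real.abs_exp]
      apply Real.exp_le_exp.mpr
      apply Finset.sum_le_sum
      intro l _
      calc b l * rademacher (l+1) t ≤ |b l * rademacher (l+1) t| := le_abs_self _
        _ = |b l| * |rademacher (l+1) t| := abs_mul _ _
        _ ≤ |b l| * 1 := by gcongr; exact my_abs_rad _ _
        _ = _ := mul_one _
  have hUle : ∀ b : ℕ → ℝ, ∑ l ∈ Finset.range L, b l ^ 2 ≤ 1 →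
      ∫ t in Set.Icc (0:ℝ) 1, U b t ≤ Real.exp (1/2) := by
    intro b hb
    rw [integral_Icc_eq_integral_Ioc, ← intervalIntegral.integral_of_le zero_le_one]
    refine (my_mgf_le L b).trans (Real.exp_le_exp.2 (by linarith))
  have hb : ∑ l ∈ Finset.range L, (c l / x) ^ 2 ≤ 1 := by
    simp only [div_pow]
    rw [← Finset.sum_div, hx2]
    exact div_le_one_of_le₀ hc (by positivity)
  have hb' : ∑ l ∈ Finset.range L, (-(c l / x)) ^ 2 ≤ 1 := by
    simpa only [neg_sq] using hb
  have hpt : ∀ t, |∑ m ∈ A, psi m t| ^ r ≤ x ^ r * (D * Real.exp 4) *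
      (U (fun l => c l / x) t + U (fun l => -(c l / x)) t) := by
    intro t
    set S := ∑ l ∈ Finset.range L, c l / x * rademacher (l + 1) t with hS
    have hSx : ∑ l ∈ Finset.range L, c l * rademacher (l + 1) t = x * S := by
      rw [hS, Finset.mul_sum]
      apply Finset.sum_congr rfl
      intros; field_simp
    have hS1 : U (fun l => c l / x) t = Real.exp S := rfl
    have hS2 : U (fun l => -(c l / x)) t = Real.exp (-S) := by
      simp only [hU, hS, neg_mul, Finset.sum_neg_distrib]
    rw [hS1, hS2, hdec, hSx]
    have hle : |W t + x * S| ≤ x * (4 + |S|) := by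
      calc |W t + x * S| ≤ |W t| + |x * S| := abs_add_le _ _
        _ ≤ 4 * x + x * |S| := by rw [abs_mul, abs_of_pos hx0]; gcongr; exact hW t
        _ = _ := by ring
    calc |W t + x * S| ^ r ≤ (x * (4 + |S|)) ^ r := Real.rpow_le_rpow (abs_nonneg _) hle hr.le
      _ = x ^ r * (4 + |S|) ^ r := Real.mul_rpow hx0.le (by positivity)
      _ ≤ x ^ r * (D * Real.exp (4 + |S|)) := by gcongr; exact hD _ (by positivity)
      _ = x ^ r * (D * Real.exp 4) * Real.exp |S| := by rw [Real.exp_add]; ring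
      _ ≤ _ := by gcongr; exact Real.exp_abs_le S
  have hint : ∫ t in Set.Icc (0:ℝ) 1, |∑ m ∈ A, psi m t| ^ r ≤ x ^ r * Q := by
    calc ∫ t in Set.Icc (0:ℝ) 1, |∑ m ∈ A, psi m t| ^ r
        ≤ ∫ t in Set.Icc (0:ℝ) 1, x ^ r * (D * Real.exp 4) *
      (U (fun l => c l / x) t + U (fun l => -(c l / x)) t) := by
          apply integral_mono_of_nonneg
          · exact Filter.Eventually.of_forall fun t => by positivity
          · exact ((hUint _).add (hUint _)).const_mul _
          · exact Filter.Eventually.of_forall hpt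
      _ = x ^ r * (D * Real.exp 4) * (∫ t in Set.Icc (0:ℝ) 1, U (fun l => c l / x) t)
          + x ^ r * (D * Real.exp 4) * (∫ t in Set.Icc (0:ℝ) 1, U (fun l => -(c l / x)) t) := by
          rw [integral_const_mul, integral_add (hUint _) (hUint _), mul_add]
      _ ≤ x ^ r * (D * Real.exp 4) * Real.exp (1/2) + x ^ r * (D * Real.exp 4) * Real.exp (1/2) := by
          gcongr
          · exact hUle _ hb
          · exact hUle _ hb'
      _ = x ^ r * Q := by rw [hQ]; ring
  unfold LpNorm
  calc (∫ t in Set.Icc (0:ℝ) 1, |∑ m ∈ A, psi m t| ^ r) ^ (1 / r) ≤ (x ^ r * Q) ^ (1 / r) := by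
        apply Real.rpow_le_rpow _ hint (by positivity)
        exact integral_nonneg fun t => by positivity
    _ = Q ^ (1 / r) * x := by
        rw [Real.mul_rpow (by positivity) hQ0, ← Real.rpow_mul hx0.le,
          mul_one_div_cancel hr.ne', Real.rpow_one, mul_comm]

/-- The system `B = {ψ_m}` is bi-democratic:
`‖∑_{m∈A} ψ_m‖_q ‖∑_{m∈A} ψ_m‖_p ≤ C |A|` for conjugate `1 < q < 2 < p < ∞`. -/
theorem stmt_13 (q p : ℝ) (hq1 : 1 < q) (hq2 : q < 2) (hp : 2 < p)
    (hqp : 1/q + 1/p = 1) :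
    ∃ C : ℝ, ∀ A : Finset ℕ,
      LpNorm q (fun t => ∑ m ∈ A, psi m t) * LpNorm p (fun t => ∑ m ∈ A, psi m t)
        ≤ C * (A.card : ℝ) := by
  obtain ⟨C₁, h10, h1⟩ := my_bound q (by linarith)
  obtain ⟨C₂, h20, h2⟩ := my_bound p (by linarith)
  refine ⟨C₁ * C₂, fun A => ?_⟩
  have hn : 0 ≤ LpNorm p (fun t => ∑ m ∈ A, psi m t) := by
    unfold LpNorm
    exact Real.rpow_nonneg (integral_nonneg fun t => by positivity) _
  calc _ ≤ (C₁ * Real.sqrt A.card) * (C₂ * Real.sqrt A.card) :=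
        mul_le_mul (h1 A) (h2 A) hn (by positivity)
    _ = C₁ * C₂ * (Real.sqrt A.card * Real.sqrt A.card) := by ring
    _ = _ := by rw [Real.mul_self_sqrt (by positivity)]
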